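/- Let n ≥ 1 and let a x : Fin n → ℝ be arbitrary. Then the family indexed by strictly decreasing tuples k : Fin n → ℕ, with term (∏_{l} (1 / (k l)!)) · D(a, k) · D(x, k), has sum equal to the determinant of the n×n matrix with (i,j) entry Real.exp (a j * x i). (Determinant form of the exponential example: Σ_λ (1/C_λ) s_λ(a) s_λ(x) = det(e^{a_j x_i}) / (V(a) V(x)), from Theorem 1 with g(x) = e^x.) -/

import Mathlib

/-! Expanding the determinant of the product of an `n × ι` matrix with an `ι × n` matrix gives a sum
over all tuples `k : Fin n → ι`. Tuples with a repeated entry contribute zero, and every other tuple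
is uniquely a strictly decreasing one composed with a permutation; summing over the permutations
gives the Cauchy–Binet formula, valid for infinite `ι` when the entries converge absolutely. The
identity is this formula for the factorization `exp (aⱼ * xᵢ) = ∑ₘ xᵢ ^ m * (aⱼ ^ m / m!)` of the
matrix on the right into two infinite Vandermonde-like matrices. -/

open Matrix

open Equiv (Perm)

open Function (Injective)

open scoped Nat

section PiProd

variable {R : Type*} [NormedCommRing R]

theorem summable_norm_pi_prod_fin {n : ℕ} {ι : Fin n → Type*} {f : ∀ i, ι i → R}
    (hf : ∀ i, Summable fun m => ‖f i m‖) :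
    Summable fun k : ∀ i, ι i => ‖∏ i, f i (k i)‖ := by
  induction n with
  | zero => exact .of_finite
  | succ n ih =>
    rw [← (Fin.consEquiv ι).summable_iff]
    refine ((hf 0).mul_norm (ih fun i => hf i.succ)).congr fun k => ?_
    simp [Fin.prod_univ_succ, Fin.consEquiv]

theorem hasSum_pi_prod_fin [CompleteSpace R] {n : ℕ} {ι : Fin n → Type*} {f : ∀ i, ι i → R}
    (hf : ∀ i, Summable fun m => ‖f i m‖) :
    HasSum (fun k : ∀ i, ι i => ∏ i, f i (k i)) (∏ i, ∑' m, f i m) := by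
  induction n with
  | zero => simp
  | succ n ih =>
    have htail := ih fun i => hf i.succ
    have hsummable :=
      summable_mul_of_summable_norm (hf 0) (summable_norm_pi_prod_fin fun i => hf i.succ)
    rw [← (Fin.consEquiv ι).hasSum_iff, Fin.prod_univ_succ]
    refine ((hf 0).of_norm.hasSum.mul htail hsummable).congr_fun fun k => ?_
    simp [Fin.prod_univ_succ, Fin.consEquiv]

theorem hasSum_pi_prod [CompleteSpace R] {κ : Type*} [Fintype κ] {ι : κ → Type*}
    {f : ∀ i, ι i → R} (hf : ∀ i, Summable fun m => ‖f i m‖) :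
    HasSum (fun k : ∀ i, ι i => ∏ i, f i (k i)) (∏ i, ∑' m, f i m) := by
  let e := (Fintype.equivFin κ).symm
  rw [← (e.piCongrLeft ι).hasSum_iff, ← e.prod_comp]
  refine (hasSum_pi_prod_fin fun i => hf (e i)).congr_fun fun k => ?_
  simp [← e.prod_comp]

end PiProd

section StrictAnti

variable {n : ℕ} {ι : Type*}

theorem injective_strictAnti_comp_perm [PartialOrder ι] :
    Injective fun p : {k : Fin n → ι // StrictAnti k} × Perm (Fin n) => p.1.1 ∘ p.2 := by
  rintro ⟨⟨k, hk⟩, σ⟩ ⟨⟨l, hl⟩, τ⟩ (h : k ∘ σ = l ∘ τ)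
  have hk_eq : (k ∘ σ) ∘ σ.symm = k := (Equiv.comp_symm_eq σ _ _).2 rfl
  have hl_eq : (k ∘ σ) ∘ τ.symm = l := (Equiv.comp_symm_eq τ _ _).2 h
  obtain rfl : k = l := by
    rw [← hk_eq, ← hl_eq]
    exact Tuple.unique_antitone (by simpa only [hk_eq] using hk.antitone)
      (by simpa only [hl_eq] using hl.antitone)
  obtain rfl : σ = τ := Equiv.ext fun i => hk.injective (congrFun h i)
  rfl

theorem range_strictAnti_comp_perm [LinearOrder ι] :
    Set.range (fun p : {k : Fin n → ι // StrictAnti k} × Perm (Fin n) => p.1.1 ∘ p.2) =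
      {k | Injective k} := by
  ext k
  constructor
  · rintro ⟨⟨⟨l, hl⟩, σ⟩, rfl⟩
    exact hl.injective.comp σ.injective
  · intro hk
    let σ := Tuple.sort (OrderDual.toDual ∘ k)
    have hσ : Antitone (k ∘ σ) := Tuple.monotone_sort (OrderDual.toDual ∘ k)
    refine ⟨(⟨k ∘ σ, hσ.strictAnti_of_injective (hk.comp σ.injective)⟩, σ⁻¹), ?_⟩
    ext i
    simp

theorem hasSum_strictAnti_sum_perm [LinearOrder ι] {M : Type*} [AddCommMonoid M]
    [TopologicalSpace M] [ContinuousAdd M] [RegularSpace M] {f : (Fin n → ι) → M} {s : M}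
    (hf : HasSum f s) (hf_zero : ∀ k, ¬ Injective k → f k = 0) :
    HasSum (fun k : {k : Fin n → ι // StrictAnti k} => ∑ σ : Perm (Fin n), f (k ∘ σ)) s := by
  have hpairs := (injective_strictAnti_comp_perm.hasSum_iff fun k hk =>
    hf_zero k (by rwa [range_strictAnti_comp_perm] at hk)).2 hf
  exact hpairs.prod_fiberwise fun k => hasSum_fintype _

end StrictAnti

section CauchyBinet

variable {R : Type*} [NormedCommRing R] [CompleteSpace R]

theorem hasSum_det_submatrix_mul_prod {κ ι : Type*} [Fintype κ] [DecidableEq κ]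
    {A : Matrix κ ι R} {B : Matrix ι κ R}
    (hAB : ∀ i j, Summable fun m => ‖A i m * B m j‖) :
    HasSum (fun k : κ → ι => (A.submatrix id k).det * ∏ j, B (k j) j)
      (of fun i j => ∑' m, A i m * B m j).det := by
  rw [det_apply']
  have hperm (σ : Perm κ) := hasSum_pi_prod fun j => hAB (σ j) j
  refine (hasSum_sum fun σ _ => (hperm σ).mul_left ((Perm.sign σ : ℤ) : R)).congr_fun fun k => ?_
  simp only [det_apply', Finset.sum_mul, Finset.prod_mul_distrib, submatrix_apply, id, mul_assoc]

theorem hasSum_det_submatrix_mul_det_submatrix {n : ℕ} {ι : Type*} [LinearOrder ι]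
    {A : Matrix (Fin n) ι R} {B : Matrix ι (Fin n) R}
    (hAB : ∀ i j, Summable fun m => ‖A i m * B m j‖) :
    HasSum (fun k : {k : Fin n → ι // StrictAnti k} =>
        (A.submatrix id k).det * (B.submatrix k id).det)
      (of fun i j => ∑' m, A i m * B m j).det := by
  refine (hasSum_strictAnti_sum_perm (hasSum_det_submatrix_mul_prod hAB) fun k hk => ?_).congr_fun
    fun k => ?_
  · obtain ⟨i, j, hij, hne⟩ := Function.not_injective_iff.1 hk
    rw [det_zero_of_column_eq hne (by simp [hij]), zero_mul]
  · rw [det_apply' (B.submatrix k id), Finset.mul_sum]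
    refine Finset.sum_congr rfl fun σ _ => ?_
    have hσ : (A.submatrix id (k ∘ σ)).det = Perm.sign σ * (A.submatrix id k).det :=
      det_permute' σ (A.submatrix id k)
    simp only [hσ, submatrix_apply, Function.comp_apply, id]
    ring

theorem hasSum_prod_coeff_mul_det_pow_mul_det_pow {n : ℕ} {c : ℕ → R} {a x : Fin n → R}
    (h : ∀ i j, Summable fun m => ‖c m * (a j * x i) ^ m‖) :
    HasSum (fun k : {k : Fin n → ℕ // StrictAnti k} =>
        (∏ l, c (k.1 l)) * (of fun i j => a i ^ k.1 j).det * (of fun i j => x i ^ k.1 j).det)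
      (of fun i j => ∑' m, c m * (a j * x i) ^ m).det := by
  have hfactor (i j m) : c m * (a j * x i) ^ m = x i ^ m * (c m * a j ^ m) := by ring
  simp only [hfactor] at h ⊢
  refine (hasSum_det_submatrix_mul_det_submatrix (A := of fun i m => x i ^ m)
    (B := of fun m j => c m * a j ^ m) h).congr_fun fun k => ?_
  have hB : ((of fun m j => c m * a j ^ m).submatrix k id).det =
      (∏ l, c (k.1 l)) * (of fun i j => a i ^ k.1 j).det := by
    rw [← det_transpose (of fun i j => a i ^ k.1 j)]
    exact det_mul_column _ _
  rw [hB, mul_comm]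
  rfl

end CauchyBinet

theorem cauchy_type_identity_exp_general {n : ℕ} {𝔸 : Type*} [NormedCommRing 𝔸] [NormedAlgebra ℚ 𝔸]
    [CompleteSpace 𝔸] (a x : Fin n → 𝔸) :
    HasSum
      (fun k : {k : Fin n → ℕ // StrictAnti k} =>
        (∏ l, (1 / (k.1 l)! : ℚ)) •
          ((of fun i j => a i ^ k.1 j).det * (of fun i j => x i ^ k.1 j).det))
      (of fun i j => NormedSpace.exp (a j * x i)).det := by
  have hsum := hasSum_prod_coeff_mul_det_pow_mul_det_pow
    (c := fun m => algebraMap ℚ 𝔸 (1 / m !)) (a := a) (x := x) fun i j => by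
      simpa only [one_div, Algebra.smul_def] using
        NormedSpace.norm_expSeries_summable' (𝕂 := ℚ) (a j * x i)
  simpa only [NormedSpace.exp_eq_tsum ℚ, one_div, Algebra.smul_def, map_prod, mul_assoc] using hsum

theorem cauchy_type_identity_exp
    (n : ℕ) (hn : 1 ≤ n) (a x : Fin n → ℝ) :
    HasSum
      (fun k : {k : Fin n → ℕ // StrictAnti k} =>
        (∏ l : Fin n, (1 / (Nat.factorial (k.1 l) : ℝ))) *
          (Matrix.of fun i j : Fin n => (a i) ^ (k.1 j)).det *
          (Matrix.of fun i j : Fin n => (x i) ^ (k.1 j)).det)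
      (Matrix.of fun i j : Fin n => Real.exp (a j * x i)).det := by
  simpa [Real.exp_eq_exp_ℝ, Rat.smul_def, mul_assoc] using cauchy_type_identity_exp_general a x
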